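/- Let n ≥ 1. The set 𝔖₊ of multi-sequences s = (s_α)_{α∈ℕ₀ⁿ} with s_0 = 1 that are moment sequences of Borel measures on ℝⁿ is closed in the topology of pointwise (coordinate-wise) convergence: if s⁽ᵏ⁾ ∈ 𝔖₊ and s_α⁽ᵏ⁾ → s_α for every α, then s ∈ 𝔖₊. -/

import Mathlib

open MeasureTheory Filter

/-- `s : (Fin n →₀ ℕ) → ℝ` is a moment (multi-)sequence if there is a Borel measure `μ` on
`ℝⁿ` with all moments finite such that `s_α = ∫ x^α dμ` for all `α`. -/
def IsMomentSeq {n : ℕ} (s : (Fin n →₀ ℕ) → ℝ) : Prop :=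
  ∃ μ : Measure (Fin n → ℝ),
    (∀ α : Fin n →₀ ℕ, Integrable (fun x : Fin n → ℝ => ∏ i, x i ^ α i) μ) ∧
    ∀ α : Fin n →₀ ℕ, s α = ∫ x, (∏ i, x i ^ α i) ∂μ

/-- A set of measures along which some `g ≥ ‖x‖²` has uniformly bounded integral is tight. -/
theorem isTightMeasureSet_of_integral_le_of_sq_norm_le {E : Type*} [NormedAddCommGroup E]
    [ProperSpace E] [MeasurableSpace E] {S : Set (Measure E)} {g : E → ℝ} {C : ℝ}
    (hg : ∀ x, ‖x‖ ^ 2 ≤ g x) (hint : ∀ μ ∈ S, Integrable g μ)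
    (hC : ∀ μ ∈ S, ∫ x, g x ∂μ ≤ C) : IsTightMeasureSet S := by
  have hg0 : ∀ x, 0 ≤ g x := fun x => (sq_nonneg _).trans (hg x)
  apply isTightMeasureSet_of_tendsto_measure_norm_gt
  have hlim : Tendsto (fun r : ℝ => ENNReal.ofReal (C / r ^ 2)) atTop (nhds 0) := by
    rw [← ENNReal.ofReal_zero]
    exact ENNReal.tendsto_ofReal
      (tendsto_const_nhds.div_atTop (tendsto_pow_atTop two_ne_zero))
  refine tendsto_of_tendsto_of_tendsto_of_le_of_le' tendsto_const_nhds hlim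
    (Eventually.of_forall fun _ => zero_le) ?_
  filter_upwards [eventually_gt_atTop 0] with r hr
  refine iSup₂_le fun μ hμ => ?_
  have hr2 : 0 < r ^ 2 := by positivity
  calc μ {x | r < ‖x‖}
      ≤ μ {x | ENNReal.ofReal (r ^ 2) ≤ ENNReal.ofReal (g x)} := by
        refine measure_mono fun x hx => ENNReal.ofReal_le_ofReal ((hg x).trans' ?_)
        have : r < ‖x‖ := hx
        gcongr
    _ ≤ (∫⁻ x, ENNReal.ofReal (g x) ∂μ) / ENNReal.ofReal (r ^ 2) :=
        meas_ge_le_lintegral_div (hint μ hμ).aestronglyMeasurable.aemeasurable.ennreal_ofReal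
          (by simpa using hr2.ne') ENNReal.ofReal_ne_top
    _ ≤ ENNReal.ofReal (C / r ^ 2) := by
        rw [← ofReal_integral_eq_lintegral_ofReal (hint μ hμ) (Eventually.of_forall hg0),
          ← ENNReal.ofReal_div_of_pos hr2]
        have := hC μ hμ
        gcongr

section WeakLimit

variable {X ι : Type*} [TopologicalSpace X] [MeasurableSpace X] [OpensMeasurableSpace X]
  {F : Filter ι} [NeBot F] {μ : ι → ProbabilityMeasure X} {ν : ProbabilityMeasure X}

/-- A uniform bound on the integrals of a nonnegative continuous function passes to weak limits. -/
theorem integrable_and_integral_le_of_tendsto (hμ : Tendsto μ F (nhds ν)) {g : X → ℝ}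
    (hg : Continuous g) (hg0 : ∀ x, 0 ≤ g x) {C : ℝ}
    (hint : ∀ i, Integrable g (μ i : Measure X)) (hC : ∀ i, ∫ x, g x ∂(μ i : Measure X) ≤ C) :
    Integrable g (ν : Measure X) ∧ ∫ x, g x ∂(ν : Measure X) ≤ C := by
  have hC0 : 0 ≤ C := by
    obtain ⟨i⟩ := F.nonempty_of_neBot
    exact (integral_nonneg hg0).trans (hC i)
  have htrunc : ∀ m : ℕ, ∫⁻ x, ENNReal.ofReal (min (g x) m) ∂(ν : Measure X)
      ≤ ENNReal.ofReal C := by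
    intro m
    have h0 : ∀ x, 0 ≤ min (g x) m := fun x => le_min (hg0 x) m.cast_nonneg
    let G : BoundedContinuousFunction X ℝ :=
      BoundedContinuousFunction.ofNormedAddCommGroup (fun x => min (g x) m) (by fun_prop) m
        (fun x => by rw [Real.norm_of_nonneg (h0 x)]; exact min_le_right _ _)
    rw [← ofReal_integral_eq_lintegral_ofReal (f := fun x => min (g x) m)
      (G.integrable _) (Eventually.of_forall h0)]
    refine ENNReal.ofReal_le_ofReal ?_
    refine le_of_tendsto' (ProbabilityMeasure.tendsto_iff_forall_integral_tendsto.1 hμ G)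
      fun i => (hC i).trans' ?_
    exact integral_mono (G.integrable _) (hint i) fun x => min_le_left _ _
  have hle : ∫⁻ x, ENNReal.ofReal (g x) ∂(ν : Measure X) ≤ ENNReal.ofReal C := by
    refine le_of_tendsto' (lintegral_tendsto_of_tendsto_of_monotone
      (f := fun (m : ℕ) x => ENNReal.ofReal (min (g x) m)) (fun m => ?_) ?_ ?_) htrunc
    · exact (hg.min continuous_const).measurable.ennreal_ofReal.aemeasurable
    · refine Eventually.of_forall fun x m k hmk => ENNReal.ofReal_le_ofReal ?_
      gcongr
    · refine Eventually.of_forall fun x => tendsto_const_nhds.congr' ?_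
      filter_upwards [eventually_ge_atTop ⌈g x⌉₊] with m hm
      rw [min_eq_left (Nat.ceil_le.1 hm)]
  have hgi : Integrable g (ν : Measure X) :=
    (lintegral_ofReal_ne_top_iff_integrable hg.measurable.aestronglyMeasurable
      (Eventually.of_forall hg0)).1 (hle.trans_lt ENNReal.ofReal_lt_top).ne
  refine ⟨hgi, (ENNReal.ofReal_le_ofReal_iff hC0).1 ?_⟩
  rwa [ofReal_integral_eq_lintegral_ofReal hgi (Eventually.of_forall hg0)]

theorem abs_sub_truncation_le_sq_div {M : ℝ} (hM : 0 < M) (y : ℝ) :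
    |y - max (-M) (min y M)| ≤ y ^ 2 / M := by
  rw [le_div_iff₀ hM]
  rcases le_total y M with h | h
  · rw [min_eq_left h]
    rcases le_total (-M) y with h' | h'
    · rw [max_eq_right h']
      simpa using sq_nonneg y
    · rw [max_eq_left h', abs_of_nonpos (by linarith)]
      nlinarith
  · rw [min_eq_right h, max_eq_right (by linarith), abs_of_nonneg (by linarith)]
    nlinarith

theorem abs_integral_sub_integral_truncation_le {m : Measure X} [IsFiniteMeasure m] {f : X → ℝ}
    (hf : Continuous f) {C : ℝ} (hint : Integrable (fun x => f x ^ 2) m)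
    (hC : ∫ x, f x ^ 2 ∂m ≤ C) {M : ℝ} (hM : 0 < M) :
    |∫ x, f x ∂m - ∫ x, max (-M) (min (f x) M) ∂m| ≤ C / M := by
  have hfi : Integrable f m :=
    ((memLp_two_iff_integrable_sq hf.measurable.aestronglyMeasurable).2 hint).integrable one_le_two
  have hti : Integrable (fun x => max (-M) (min (f x) M)) m :=
    (integrable_const (-M)).sup (hfi.inf (integrable_const M))
  rw [← integral_sub hfi hti]
  calc |∫ x, (f x - max (-M) (min (f x) M)) ∂m|
      ≤ ∫ x, |f x - max (-M) (min (f x) M)| ∂m := abs_integral_le_integral_abs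
    _ ≤ ∫ x, f x ^ 2 / M ∂m :=
        integral_mono (hfi.sub hti).abs (hint.div_const M)
          fun x => abs_sub_truncation_le_sq_div hM (f x)
    _ ≤ C / M := by
        rw [integral_div]
        gcongr

/-- Integrals of a continuous function with uniformly bounded second moments converge along a
weakly convergent family. -/
theorem integrable_and_tendsto_integral_of_integral_sq_le (hμ : Tendsto μ F (nhds ν)) {f : X → ℝ}
    (hf : Continuous f) {C : ℝ} (hint : ∀ i, Integrable (fun x => f x ^ 2) (μ i : Measure X))
    (hC : ∀ i, ∫ x, f x ^ 2 ∂(μ i : Measure X) ≤ C) :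
    Integrable f (ν : Measure X) ∧
      Tendsto (fun i => ∫ x, f x ∂(μ i : Measure X)) F (nhds (∫ x, f x ∂(ν : Measure X))) := by
  obtain ⟨hνi, hνC⟩ :=
    integrable_and_integral_le_of_tendsto hμ (hf.pow 2) (fun x => sq_nonneg _) hint hC
  refine ⟨((memLp_two_iff_integrable_sq hf.measurable.aestronglyMeasurable).2 hνi).integrable
    one_le_two, Metric.tendsto_nhds.2 fun ε hε => ?_⟩
  have hC0 : 0 ≤ C := (integral_nonneg fun x => sq_nonneg (f x)).trans hνC
  obtain ⟨M, hM, hCM⟩ : ∃ M : ℝ, 0 < M ∧ C / M < ε / 3 := by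
    refine ⟨3 * (C + 1) / ε, by positivity, ?_⟩
    rw [div_lt_iff₀ (by positivity)]
    field_simp
    linarith
  let G : BoundedContinuousFunction X ℝ :=
    BoundedContinuousFunction.ofNormedAddCommGroup (fun x => max (-M) (min (f x) M))
      (by fun_prop) M (fun x => abs_le.2 ⟨le_max_left _ _, max_le (by linarith) (min_le_right _ _)⟩)
  filter_upwards [Metric.tendsto_nhds.1
    (ProbabilityMeasure.tendsto_iff_forall_integral_tendsto.1 hμ G) (ε / 3) (by positivity)]
    with i hi
  have h1 := abs_le.1 (abs_integral_sub_integral_truncation_le hf (hint i) (hC i) hM)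
  have h2 := abs_le.1 (abs_integral_sub_integral_truncation_le hf hνi hνC hM)
  rw [Real.dist_eq] at hi ⊢
  have h3 : |∫ x, max (-M) (min (f x) M) ∂(μ i : Measure X)
      - ∫ x, max (-M) (min (f x) M) ∂(ν : Measure X)| < ε / 3 := hi
  rw [abs_lt] at h3 ⊢
  constructor <;> linarith [h1.1, h1.2, h2.1, h2.2, h3.1, h3.2]

end WeakLimit

/-- The set `𝔖₊` of normalized moment sequences is closed under coordinate-wise
convergence: a pointwise limit of moment sequences with `s_0 = 1` is again such a
moment sequence. -/
theorem stmt9 (n : ℕ) (hn : 1 ≤ n)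
    (s : ℕ → (Fin n →₀ ℕ) → ℝ) (t : (Fin n →₀ ℕ) → ℝ)
    (hs : ∀ k, s k 0 = 1 ∧ IsMomentSeq (s k))
    (hconv : ∀ α, Tendsto (fun k => s k α) atTop (nhds (t α))) :
    t 0 = 1 ∧ IsMomentSeq t := by
  refine ⟨tendsto_nhds_unique (hconv 0) (by simp [(hs _).1]), ?_⟩
  choose m hint hm using fun k => (hs k).2
  have hprob : ∀ k, IsProbabilityMeasure (m k) := fun k => by
    have h := hm k 0
    rw [(hs k).1] at h
    exact isProbabilityMeasure_iff_real.2 (by simpa using h.symm)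
  let μ : ℕ → ProbabilityMeasure (Fin n → ℝ) := fun k => ⟨m k, hprob k⟩
  choose B hB using fun α => (hconv α).bddAbove_range
  have hB' : ∀ α k, s k α ≤ B α := fun α k => hB α ⟨k, rfl⟩
  have hsq : ∀ (α : Fin n →₀ ℕ) (x : Fin n → ℝ),
      (∏ i, x i ^ α i) ^ 2 = ∏ i, x i ^ (2 • α) i := fun α x => by
    simp [← Finset.prod_pow, ← pow_mul, mul_comm]
  have hcoord : ∀ (j : Fin n) (x : Fin n → ℝ),
      ∏ i, x i ^ (Finsupp.single j 2 : Fin n →₀ ℕ) i = x j ^ 2 := fun j x => by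
    rw [Finset.prod_eq_single j] <;> simp +contextual [eq_comm]
  have hcoordint : ∀ k j, Integrable (fun x : Fin n → ℝ => x j ^ 2) (m k) := fun k j => by
    simpa only [hcoord] using hint k (Finsupp.single j 2)
  have htight : IsTightMeasureSet {(p : Measure (Fin n → ℝ)) | p ∈ Set.range μ} := by
    refine isTightMeasureSet_of_integral_le_of_sq_norm_le (g := fun x => ∑ j, x j ^ 2)
      (C := ∑ j, B (Finsupp.single j 2)) (fun x => ?_) ?_ ?_
    · have h0 : 0 ≤ ∑ j, x j ^ 2 := Finset.sum_nonneg fun j _ => sq_nonneg _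
      rw [← Real.le_sqrt (norm_nonneg _) h0, pi_norm_le_iff_of_nonneg (Real.sqrt_nonneg _)]
      intro j
      refine Real.abs_le_sqrt ?_
      exact Finset.single_le_sum (f := fun j => x j ^ 2) (fun j _ => sq_nonneg _)
        (Finset.mem_univ j)
    · rintro _ ⟨_, ⟨k, rfl⟩, rfl⟩
      exact integrable_finsetSum _ fun j _ => hcoordint k j
    · rintro _ ⟨_, ⟨k, rfl⟩, rfl⟩
      change ∫ x, ∑ j, x j ^ 2 ∂(m k) ≤ _
      rw [integral_finsetSum _ fun j _ => hcoordint k j]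
      refine Finset.sum_le_sum fun j _ => ?_
      have h := hB' (Finsupp.single j 2) k
      rw [hm k] at h
      simpa only [hcoord] using h
  obtain ⟨ν, -, hν⟩ := (isCompact_closure_of_isTightMeasureSet htight).ultrafilter_le_nhds
    ((hyperfilter ℕ).map μ) (by
      refine le_principal_iff.2 (Filter.mem_of_superset (Filter.mem_map.2 ?_) subset_closure)
      exact Filter.Eventually.of_forall fun k => Set.mem_range_self k)
  have hμν : Tendsto μ (hyperfilter ℕ : Filter ℕ) (nhds ν) := hν
  have key := fun α : Fin n →₀ ℕ => integrable_and_tendsto_integral_of_integral_sq_le hμν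
    (f := fun x => ∏ i, x i ^ α i) (C := B (2 • α)) (by fun_prop)
    (fun k => by simp only [hsq]; exact hint k (2 • α))
    (fun k => by simp only [hsq]; exact (hm k (2 • α)).symm.trans_le (hB' (2 • α) k))
  refine ⟨ν, fun α => (key α).1, fun α => tendsto_nhds_unique
    ((hconv α).mono_left Nat.hyperfilter_le_atTop) ((key α).2.congr fun k => (hm k α).symm)⟩
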